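/- Let V = ℂ ⊗_ℝ ℍ (a complex vector space of dimension 4 via the left tensor factor) and let L be the ℤ-span in V of 1⊗1, 1⊗i, 1⊗j, 1⊗k, I⊗1, I⊗i, I⊗j, I⊗k, where I ∈ ℂ is the imaginary unit and i, j, k are the quaternion units. Then the ring R of ℂ-linear endomorphisms f of V with f(L) ⊆ L is a free ℤ-module of rank exactly 32 = 2·4². -/

import Mathlib

open scoped TensorProduct Quaternion

/-- The quaternion unit `i`. -/
def qi : ℍ[ℝ] := ⟨0, 1, 0, 0⟩
/-- The quaternion unit `j`. -/
def qj : ℍ[ℝ] := ⟨0, 0, 1, 0⟩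
/-- The quaternion unit `k`. -/
def qk : ℍ[ℝ] := ⟨0, 0, 0, 1⟩

/-- The eight generators `1⊗1, 1⊗i, 1⊗j, 1⊗k, I⊗1, I⊗i, I⊗j, I⊗k`
of the integral lattice in `ℂ ⊗[ℝ] ℍ`. -/
noncomputable def latticeGens : Fin 8 → (ℂ ⊗[ℝ] ℍ[ℝ]) :=
  ![(1 : ℂ) ⊗ₜ[ℝ] (1 : ℍ[ℝ]), (1 : ℂ) ⊗ₜ[ℝ] qi, (1 : ℂ) ⊗ₜ[ℝ] qj, (1 : ℂ) ⊗ₜ[ℝ] qk,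
    Complex.I ⊗ₜ[ℝ] (1 : ℍ[ℝ]), Complex.I ⊗ₜ[ℝ] qi, Complex.I ⊗ₜ[ℝ] qj, Complex.I ⊗ₜ[ℝ] qk]

/-- The integral subring lattice `L = ℤ[i] ⊗_ℤ ℍ_ℤ` inside `V = ℂ ⊗[ℝ] ℍ`,
realized as the `ℤ`-span of the eight pure tensors above. -/
noncomputable def L : Submodule ℤ (ℂ ⊗[ℝ] ℍ[ℝ]) :=
  Submodule.span ℤ (Set.range latticeGens)

noncomputable section Aux

/-- The real basis `1, i, j, k` of `ℍ`. -/
def bH : Module.Basis (Fin 4) ℝ ℍ[ℝ] := QuaternionAlgebra.basisOneIJK (R := ℝ) (-1) 0 (-1)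

/-- The `ℂ`-basis `1⊗1, 1⊗i, 1⊗j, 1⊗k` of `ℂ ⊗ ℍ`. -/
def bV : Module.Basis (Fin 4) ℂ (ℂ ⊗[ℝ] ℍ[ℝ]) := Algebra.TensorProduct.basis ℂ bH

/-- The quaternion units. -/
def qu : Fin 4 → ℍ[ℝ] := ![1, qi, qj, qk]

lemma bH_repr (q : ℍ[ℝ]) (j : Fin 4) : bH.repr q j = ![q.re, q.imI, q.imJ, q.imK] j :=
  congrFun (QuaternionAlgebra.coe_basisOneIJK_repr (R := ℝ) (-1) 0 (-1) q) j

lemma bH_apply (i : Fin 4) : bH i = qu i := by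
  apply bH.repr.injective
  rw [Module.Basis.repr_self]
  ext j
  rw [bH_repr]
  fin_cases i <;> fin_cases j <;> simp [qu, qi, qj, qk, Finsupp.single_apply]

lemma bV_apply (i : Fin 4) : bV i = (1 : ℂ) ⊗ₜ[ℝ] qu i := by
  rw [← bH_apply]
  exact Algebra.TensorProduct.basis_apply bH i

lemma I_smul_bV (i : Fin 4) : Complex.I • bV i = Complex.I ⊗ₜ[ℝ] qu i := by
  rw [bV_apply, TensorProduct.smul_tmul', smul_eq_mul, mul_one]

lemma bV_mem (i : Fin 4) : bV i ∈ L := by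
  rw [bV_apply]
  apply Submodule.subset_span
  fin_cases i
  · exact ⟨0, rfl⟩
  · exact ⟨1, rfl⟩
  · exact ⟨2, rfl⟩
  · exact ⟨3, rfl⟩

lemma I_bV_mem (i : Fin 4) : Complex.I • bV i ∈ L := by
  rw [I_smul_bV]
  apply Submodule.subset_span
  fin_cases i
  · exact ⟨4, rfl⟩
  · exact ⟨5, rfl⟩
  · exact ⟨6, rfl⟩
  · exact ⟨7, rfl⟩

lemma gens_eq (k : Fin 8) : ∃ i, latticeGens k = bV i ∨ latticeGens k = Complex.I • bV i := by
  simp_rw [I_smul_bV, bV_apply]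
  fin_cases k
  · exact ⟨0, Or.inl rfl⟩
  · exact ⟨1, Or.inl rfl⟩
  · exact ⟨2, Or.inl rfl⟩
  · exact ⟨3, Or.inl rfl⟩
  · exact ⟨0, Or.inr rfl⟩
  · exact ⟨1, Or.inr rfl⟩
  · exact ⟨2, Or.inr rfl⟩
  · exact ⟨3, Or.inr rfl⟩

lemma mem_L_iff (x : ℂ ⊗[ℝ] ℍ[ℝ]) :
    x ∈ L ↔ ∀ i, bV.repr x i ∈ GaussianInt.toComplex.range := by
  constructor
  · intro hx
    unfold L at hx
    induction hx using Submodule.span_induction with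
    | mem x h =>
      obtain ⟨k, rfl⟩ := h
      intro j
      obtain ⟨i, h | h⟩ := gens_eq k
      · rw [h, Module.Basis.repr_self, Finsupp.single_apply]
        split_ifs
        · exact one_mem _
        · exact zero_mem _
      · rw [h, map_smul, Module.Basis.repr_self, Finsupp.smul_apply, Finsupp.single_apply,
          smul_eq_mul]
        refine mul_mem ⟨⟨0, 1⟩, ?_⟩ ?_
        · simp [GaussianInt.toComplex_def]
        split_ifs
        · exact one_mem _
        · exact zero_mem _
    | zero => intro i; rw [map_zero]; exact zero_mem _
    | add x y _ _ hx hy =>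
      intro i
      rw [map_add]
      exact add_mem (hx i) (hy i)
    | smul a x _ hx =>
      intro i
      rw [map_zsmul]
      exact zsmul_mem (hx i) a
  · intro h
    rw [← bV.sum_repr x]
    refine Submodule.sum_mem _ fun i _ => ?_
    obtain ⟨z, hz⟩ := h i
    rw [← hz]
    have : (GaussianInt.toComplex z) • bV i = z.re • bV i + z.im • (Complex.I • bV i) := by
      rw [GaussianInt.toComplex_def, add_smul, mul_smul, Int.cast_smul_eq_zsmul,
        Int.cast_smul_eq_zsmul]
    rw [this]
    exact add_mem (L.smul_mem _ (bV_mem i)) (L.smul_mem _ (I_bV_mem i))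

/-- Gaussian integer matrices acting on `ℂ ⊗ ℍ`. -/
def Phi : Matrix (Fin 4) (Fin 4) GaussianInt →+* Module.End ℂ (ℂ ⊗[ℝ] ℍ[ℝ]) :=
  ((Matrix.toLinAlgEquiv bV).toRingEquiv : _ →+* _).comp GaussianInt.toComplex.mapMatrix

lemma Phi_apply (M : Matrix (Fin 4) (Fin 4) GaussianInt) :
    Phi M = Matrix.toLinAlgEquiv bV (M.map GaussianInt.toComplex) := rfl

lemma Phi_inj : Function.Injective Phi := by
  intro M N h
  rw [Phi_apply, Phi_apply] at h
  have h2 := (Matrix.toLinAlgEquiv bV).injective h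
  exact Matrix.map_injective GaussianInt.toComplex_injective h2

lemma repr_apply (f : Module.End ℂ (ℂ ⊗[ℝ] ℍ[ℝ])) (x : ℂ ⊗[ℝ] ℍ[ℝ]) (i : Fin 4) :
    bV.repr (f x) i = ∑ j, LinearMap.toMatrixAlgEquiv bV f i j * bV.repr x j := by
  have := congrFun (LinearMap.toMatrix_mulVec_repr bV bV f x) i
  rw [← this]
  rfl

lemma mem_range_Phi (f : Module.End ℂ (ℂ ⊗[ℝ] ℍ[ℝ])) :
    f ∈ Phi.range ↔ ∀ x ∈ L, f x ∈ L := by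
  constructor
  · rintro ⟨M, rfl⟩ x hx
    rw [mem_L_iff] at hx ⊢
    intro i
    rw [repr_apply, Phi_apply, LinearMap.toMatrixAlgEquiv_toLinAlgEquiv]
    exact sum_mem fun j _ => mul_mem ⟨M i j, rfl⟩ (hx j)
  · intro h
    have h1 : ∀ i j, ∃ z, GaussianInt.toComplex z = LinearMap.toMatrixAlgEquiv bV f i j := by
      intro i j
      rw [LinearMap.toMatrixAlgEquiv_apply]
      exact (mem_L_iff _).1 (h _ (bV_mem j)) i
    choose M hM using h1
    refine ⟨Matrix.of M, ?_⟩
    rw [Phi_apply]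
    apply (LinearMap.toMatrixAlgEquiv bV).injective
    rw [LinearMap.toMatrixAlgEquiv_toLinAlgEquiv]
    ext i j
    exact hM i j

/-- Gaussian integers as pairs of integers. -/
def gaussEquiv : GaussianInt ≃+ (Fin 2 → ℤ) where
  toFun z := ![z.re, z.im]
  invFun v := ⟨v 0, v 1⟩
  left_inv _ := rfl
  right_inv v := by ext i; fin_cases i <;> rfl
  map_add' x y := by ext i; fin_cases i <;> simp

/-- The endomorphism ring is additively `ℤ^32`. -/
def bigEquiv : Phi.range ≃ₗ[ℤ] (Fin 4 → Fin 4 → Fin 2 → ℤ) :=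
  AddEquiv.toIntLinearEquiv <|
    (RingEquiv.toAddEquiv (RingEquiv.ofBijective Phi.rangeRestrict
      ⟨fun _ _ h => Phi_inj (congrArg Subtype.val h), Phi.rangeRestrict_surjective⟩)).symm.trans
      (AddEquiv.piCongrRight fun _ => AddEquiv.piCongrRight fun _ => gaussEquiv)

end Aux

set_option synthInstance.maxHeartbeats 1000000 in
/-- The ring of `ℂ`-linear endomorphisms of `V = ℂ ⊗[ℝ] ℍ`
(a `4`-dimensional complex vector space) preserving the lattice `L` is a free
`ℤ`-module of rank exactly `32 = 2 · 4²`: it is the endomorphism ring of the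
complex torus `S_{𝔹₁,₁,₀} = V / L`. -/
theorem endomorphism_ring_of_torus_rank_eq :
    ∃ S : Subring (Module.End ℂ (ℂ ⊗[ℝ] ℍ[ℝ])),
      (S : Set (Module.End ℂ (ℂ ⊗[ℝ] ℍ[ℝ]))) =
        {f : Module.End ℂ (ℂ ⊗[ℝ] ℍ[ℝ]) | ∀ x ∈ L, f x ∈ L} ∧
      Module.Free ℤ S ∧ Module.rank ℤ S = 32 := by
  refine ⟨Phi.range, ?_, Module.Free.of_equiv bigEquiv.symm, ?_⟩
  · ext f
    exact mem_range_Phi f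
  · rw [bigEquiv.rank_eq, rank_eq_card_basis (Pi.basis fun _ : Fin 4 => Pi.basis fun _ : Fin 4 =>
      Pi.basisFun ℤ (Fin 2))]
    simp
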